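/- For each ψ ∈ {0,1}^n and every ε > 0 one has ω*_ψ(X;(1,…,1)) = X²·vol(D) + O_ε(X^{2−1/m} + X^{3/2+ε}), with the implicit constant independent of X. -/

import Mathlib

/-!
The error term is the volume removed from `X^{1/m} D`, so it suffices to bound, for each of the
finitely many conditions, the volume of the points violating it. Rescaling by `X^{-1/m}` turns
`X^{1/m} D` into the fixed bounded region `D` and multiplies volumes by `X²`.

* `|H_w(s_w, t_w)| < 1` becomes `|H_w(T s_w, T t_w)| < 1` with `T = X^{1/m}`. A form is bounded below
  by a power of one of its normalised linear factors (`HasSmallFactor`), so one of them is `O(1 / T)`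
  at `(s_w, t_w)`, which happens on a set of volume `O(X^{-1/m})` (`form_piece_real`,
  `form_piece_complex`).
* `𝔑(F_i(s, t)) < √(Y_i) 𝔑𝔴_i` becomes `𝔑(F_i(s, t)) ≤ δ` with `δ` of order `X^{-d_i/2}`, because
  `𝔑(F_i)` is homogeneous of degree `m d_i`. The function `𝔑(F_i)^{-α}` is a product over the places
  and is locally integrable for `α < 1 / d_i`: since `F_i(1, 0) ≠ 0`, at each place it is dominated,
  for fixed `t`, by finitely many integrable kernels in `s`. Chebyshev's inequality gives the volume
  bound `O(δ^α)`, and `α` close to `1 / d_i` makes this `O(X^{-1/2 + ε})` (`norm_piece`).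

Conditions with `ψ_i = 0` read `𝔑(F_i(s, t)) ≥ 0` and hold everywhere.
-/

open NumberField UniqueFactorizationMonoid Classical MvPolynomial Pointwise

noncomputable section

variable (K : Type*) [Field K] [NumberField K]

/-- `K_∞ = K ⊗_ℚ ℝ`, identified with the mixed space `ℝ^{r₁} × ℂ^{r₂}`. -/
abbrev KInfty := NumberField.mixedEmbedding.mixedSpace K

/-- The quadratic residue (Legendre) symbol of `a ∈ O_K` modulo a prime ideal `𝔭`. -/
def legendreSymK (a : 𝓞 K) (p : Ideal (𝓞 K)) : ℤ :=
  if a ∈ p then 0 else if ∃ b : 𝓞 K, b ^ 2 - a ∈ p then 1 else -1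

/-- The Jacobi symbol `(a/𝔟)` of `K`: the product of Legendre symbols over the prime
factorization of `𝔟` (with multiplicity). -/
def jacobiSymK (a : 𝓞 K) (b : Ideal (𝓞 K)) : ℤ :=
  ((normalizedFactors b).map (fun p => legendreSymK K a p)).prod

/-- `𝔞^♭`: the product of `𝔭^{v_𝔭(𝔞)}` over the prime ideals `𝔭 ∤ 𝔴`. -/
def flatPart (w a : Ideal (𝓞 K)) : Ideal (𝓞 K) :=
  ((normalizedFactors a).filter (fun p => ¬ p ∣ w)).prod

/-- `v_𝔭(𝔞)`: the exponent of the prime ideal `𝔭` in `𝔞`. -/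
def vP (p a : Ideal (𝓞 K)) : ℕ := Multiset.count p (normalizedFactors a)

/-- The class `Z_K`: multiplicative functions on nonzero ideals, with values in `(−1,∞)`,
satisfying `f(𝔭) ≪_f 1/𝔑𝔭` for all primes `𝔭` and supported on squarefree ideals. -/
def MemZK (f : Ideal (𝓞 K) → ℝ) : Prop :=
  f ⊤ = 1 ∧
  (∀ a b : Ideal (𝓞 K), a ≠ ⊥ → b ≠ ⊥ → a ⊔ b = ⊤ → f (a * b) = f a * f b) ∧
  (∀ a : Ideal (𝓞 K), a ≠ ⊥ → -1 < f a) ∧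
  (∃ c : ℝ, 0 < c ∧ ∀ p : Ideal (𝓞 K), p.IsPrime → p ≠ ⊥ →
    |f p| ≤ c / (Ideal.absNorm p : ℝ)) ∧
  (∀ a : Ideal (𝓞 K), a ≠ ⊥ → ¬ Squarefree a → f a = 0)

/-- `1_f(𝔞) = (1 ∗ f)(𝔞) = ∏_{𝔭 ∣ 𝔞} (1 + f(𝔭))` for `f` supported on squarefree ideals. -/
def oneStar (f : Ideal (𝓞 K) → ℝ) (a : Ideal (𝓞 K)) : ℝ :=
  ∏ p ∈ (normalizedFactors a).toFinset, (1 + f p)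

/-- Evaluation `F(s,t)` of a binary form. -/
def evalForm (F : MvPolynomial (Fin 2) (𝓞 K)) (s t : 𝓞 K) : 𝓞 K :=
  MvPolynomial.eval ![s, t] F

/-- A system of binary forms `𝔉 = {(F_i, G_i) : 1 ≤ i ≤ n}`: each `F_i` is a binary form over
`O_K`, irreducible over `K`, not dividing `G_i` in `K[s,t]`; the `F_i` are pairwise coprime
over `K` (no common non-unit factor); and each `G_i` has even degree. -/
structure SystemOfForms (n : ℕ) where
  F : Fin n → MvPolynomial (Fin 2) (𝓞 K)
  G : Fin n → MvPolynomial (Fin 2) (𝓞 K)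
  dF : Fin n → ℕ
  dG : Fin n → ℕ
  F_homog : ∀ i, (F i).IsHomogeneous (dF i)
  G_homog : ∀ i, (G i).IsHomogeneous (dG i)
  dF_pos : ∀ i, 0 < dF i
  F_irred : ∀ i, Irreducible ((F i).map (algebraMap (𝓞 K) K))
  F_not_dvd_G : ∀ i, ¬ ((F i).map (algebraMap (𝓞 K) K) ∣ (G i).map (algebraMap (𝓞 K) K))
  F_coprime : ∀ i j, i ≠ j → ∀ d : MvPolynomial (Fin 2) K,
      d ∣ (F i).map (algebraMap (𝓞 K) K) → d ∣ (F j).map (algebraMap (𝓞 K) K) → IsUnit d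
  dG_even : ∀ i, Even (dG i)

/-- `G_i(𝛉_i)` is a nonzero square in `K(𝛉_i)`: if `F_i` is proportional to `t` then
`𝛉_i = (1,0)` and the condition reads `G_i(1,0) ∈ K^{×2}`; otherwise `𝛉_i = (θ_i,1)` for a
root `θ_i` of `F_i(x,1)` and the condition reads `G_i(θ_i,1) ∈ K(θ_i)^{×2}`. -/
def SystemOfForms.SquareAt {n : ℕ} (S : SystemOfForms K n) (i : Fin n) : Prop :=
  if ∃ c : K, (S.F i).map (algebraMap (𝓞 K) K) = MvPolynomial.C c * MvPolynomial.X 1 then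
    ∃ c : K, c ≠ 0 ∧
      c ^ 2 = MvPolynomial.eval ![(1 : K), 0] ((S.G i).map (algebraMap (𝓞 K) K))
  else
    ∃ θ : AlgebraicClosure K,
      MvPolynomial.eval ![θ, 1]
        (((S.F i).map (algebraMap (𝓞 K) K)).map (algebraMap K (AlgebraicClosure K))) = 0 ∧
      ∃ y : AlgebraicClosure K, y ∈ IntermediateField.adjoin K {θ} ∧ y ≠ 0 ∧
        y ^ 2 = MvPolynomial.eval ![θ, 1]
          (((S.G i).map (algebraMap (𝓞 K) K)).map (algebraMap K (AlgebraicClosure K)))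

/-- The rank `ρ(𝔉) = #{i : G_i(𝛉_i) ∈ K(𝛉_i)^{×2}}`. -/
def SystemOfForms.rank {n : ℕ} (S : SystemOfForms K n) : ℕ :=
  (Finset.univ.filter (fun i => SystemOfForms.SquareAt K S i)).card

/-- The complexity `c(𝔉) = ∑_{i : G_i(𝛉_i) ∉ K(𝛉_i)^{×2}} deg F_i`. -/
def SystemOfForms.complexity {n : ℕ} (S : SystemOfForms K n) : ℕ :=
  ∑ i ∈ Finset.univ.filter (fun i => ¬ SystemOfForms.SquareAt K S i), S.dF i

/-- Data of a region `D = ∏_{v ∣ ∞} D_v` where each `D_v ⊆ K_v²` is a compact ball of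
positive radius. -/
structure BoxData where
  ctrR : {w : InfinitePlace K // w.IsReal} → ℝ × ℝ
  radR : {w : InfinitePlace K // w.IsReal} → ℝ
  ctrC : {w : InfinitePlace K // w.IsComplex} → ℂ × ℂ
  radC : {w : InfinitePlace K // w.IsComplex} → ℝ
  radR_pos : ∀ w, 0 < radR w
  radC_pos : ∀ w, 0 < radC w

/-- The region `D ⊆ K_∞²` determined by the ball data. -/
def BoxData.D (B : BoxData K) : Set (KInfty K × KInfty K) :=
  {p | (∀ w, Real.sqrt ((p.1.1 w - (B.ctrR w).1) ^ 2 + (p.2.1 w - (B.ctrR w).2) ^ 2)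
          ≤ B.radR w) ∧
       (∀ w, Real.sqrt (‖p.1.2 w - (B.ctrC w).1‖ ^ 2 + ‖p.2.2 w - (B.ctrC w).2‖ ^ 2)
          ≤ B.radC w)}

/-- A triplet `P = (D, (σ,τ), 𝔴)` for the fixed ideal `𝔯`: `D` is a product of compact
balls, `σ O_K + τ O_K = 𝔯`, and `𝔴` is a nonzero ideal divisible by `2𝔯`. -/
structure Triplet (𝔯 : Ideal (𝓞 K)) where
  box : BoxData K
  σ : 𝓞 K
  τ : 𝓞 K
  w : Ideal (𝓞 K)
  hστ : Ideal.span {σ} ⊔ Ideal.span {τ} = 𝔯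
  hw_ne : w ≠ ⊥
  hw_dvd : (Ideal.span {(2 : 𝓞 K)} * 𝔯) ∣ w

/-- The embedding `O_K → K_∞`. -/
def iota (s : 𝓞 K) : KInfty K := mixedEmbedding K (algebraMap (𝓞 K) K s)

/-- `M*(P,X)`: the `𝔯`-primitive points `(s,t) ∈ 𝔯² ∩ X^{1/m}D` with
`(s,t) ≡ (σ,τ) mod 𝔴`. -/
def Mstar {𝔯 : Ideal (𝓞 K)} (P : Triplet K 𝔯) (X : ℝ) : Set (𝓞 K × 𝓞 K) :=
  {p | p.1 ∈ 𝔯 ∧ p.2 ∈ 𝔯 ∧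
    (iota K p.1, iota K p.2) ∈ (X ^ ((1 : ℝ) / (Module.finrank ℚ K))) • P.box.D ∧
    p.1 - P.σ ∈ P.w ∧ p.2 - P.τ ∈ P.w ∧
    Ideal.span {p.1} ⊔ Ideal.span {p.2} = 𝔯}

/-- `𝔉`-admissibility of a triplet `P`. -/
def Admissible {n : ℕ} {𝔯 : Ideal (𝓞 K)} (S : SystemOfForms K n) (P : Triplet K 𝔯) : Prop :=
  (∀ i, evalForm K (S.F i) P.σ P.τ ≠ 0) ∧
  ∀ X : ℝ, 1 ≤ X → ∀ p ∈ Mstar K P X, ∀ i,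
    evalForm K (S.F i) p.1 p.2 ≠ 0 ∧
    jacobiSymK K (evalForm K (S.G i) p.1 p.2)
      (flatPart K P.w (Ideal.span {evalForm K (S.F i) p.1 p.2})) = 1

/-- Strong `𝔉`-admissibility: in addition `F_i(σ,τ) ≢ 0 mod 𝔴` and
`v_𝔭(F_i(s,t)) = v_𝔭(F_i(σ,τ))` for all `𝔭 ∣ 𝔴`, all `i` and all `(s,t) ∈ M*(P,∞)`. -/
def StronglyAdmissible {n : ℕ} {𝔯 : Ideal (𝓞 K)} (S : SystemOfForms K n)
    (P : Triplet K 𝔯) : Prop :=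
  Admissible K S P ∧ (∀ i, evalForm K (S.F i) P.σ P.τ ∉ P.w) ∧
  ∀ X : ℝ, 1 ≤ X → ∀ p ∈ Mstar K P X, ∀ i, ∀ q : Ideal (𝓞 K), q.IsPrime → q ∣ P.w →
    vP K q (Ideal.span {evalForm K (S.F i) p.1 p.2}) =
      vP K q (Ideal.span {evalForm K (S.F i) P.σ P.τ})

/-- The summand
`r(𝔉,f,P;s,t) = ∏_{i=1}^n 1_f(F_i(s,t)^♭) · ∑_{𝔡_i ∣ F_i(s,t)^♭} (G_i(s,t)/𝔡_i)`. -/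
def rFun {n : ℕ} {𝔯 : Ideal (𝓞 K)} (S : SystemOfForms K n) (f : Ideal (𝓞 K) → ℝ)
    (P : Triplet K 𝔯) (p : 𝓞 K × 𝓞 K) : ℝ :=
  ∏ i, (oneStar K f (flatPart K P.w (Ideal.span {evalForm K (S.F i) p.1 p.2})) *
    ∑ᶠ d ∈ {d : Ideal (𝓞 K) |
        d ∣ flatPart K P.w (Ideal.span {evalForm K (S.F i) p.1 p.2})},
      (jacobiSymK K (evalForm K (S.G i) p.1 p.2) d : ℝ))

/-- The generalised divisor sum `D(𝔉,f,P;X) = ∑_{(s,t) ∈ M*(P,X)} r(𝔉,f,P;s,t)`. -/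
def DSum {n : ℕ} {𝔯 : Ideal (𝓞 K)} (S : SystemOfForms K n) (f : Ideal (𝓞 K) → ℝ)
    (P : Triplet K 𝔯) (X : ℝ) : ℝ :=
  ∑ᶠ p ∈ Mstar K P X, rFun K S f P p

end

open NumberField.InfinitePlace MeasureTheory

noncomputable section

variable (K : Type*) [Field K] [NumberField K]

/-- The embedding `O_K → K_w = ℝ` at a real place `w`. -/
def realEmbed (w : {w : InfinitePlace K // w.IsReal}) : 𝓞 K →+* ℝ :=
  (embedding_of_isReal w.2).comp (algebraMap (𝓞 K) K)

/-- The embedding `O_K → K_w = ℂ` at a complex place `w`. -/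
def complexEmbed (w : {w : InfinitePlace K // w.IsComplex}) : 𝓞 K →+* ℂ :=
  (w.1.embedding).comp (algebraMap (𝓞 K) K)

/-- Evaluation of a binary form `F` over `O_K` at the component of `(s,t) ∈ K_∞²` at a
real place `w`. -/
def realEvalForm (F : MvPolynomial (Fin 2) (𝓞 K))
    (w : {w : InfinitePlace K // w.IsReal}) (s t : ℝ) : ℝ :=
  MvPolynomial.eval ![s, t] (F.map (realEmbed K w))

/-- Evaluation of a binary form `F` over `O_K` at the component of `(s,t) ∈ K_∞²` at a
complex place `w`. -/
def complexEvalForm (F : MvPolynomial (Fin 2) (𝓞 K))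
    (w : {w : InfinitePlace K // w.IsComplex}) (s t : ℂ) : ℂ :=
  MvPolynomial.eval ![s, t] (F.map (complexEmbed K w))

/-- Componentwise evaluation `F(s,t) ∈ K_∞` of a binary form at `(s,t) ∈ K_∞²`. -/
def evalAtPlaces (F : MvPolynomial (Fin 2) (𝓞 K)) (s t : KInfty K) : KInfty K :=
  (fun w => realEvalForm K F w (s.1 w) (t.1 w),
   fun w => complexEvalForm K F w (s.2 w) (t.2 w))

/-- The norm at infinity `𝔑(x) = ∏_{v ∣ ∞} |x_v|^{m_v}` of `x ∈ K_∞`. -/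
def normInfty (x : KInfty K) : ℝ :=
  (∏ w, |x.1 w|) * ∏ w, ‖x.2 w‖ ^ 2

/-- `I_q(T)`: the volume of `{(x_1,…,x_q) ∈ ℝ^q : x_j ≥ 1 ∀ j, x_1⋯x_q < T}`. -/
def hypVol (q : ℕ) (T : ℝ) : ℝ :=
  (volume {x : Fin q → ℝ | (∀ i, 1 ≤ x i) ∧ ∏ i, x i < T}).toReal

/-- `𝔴`-part of an ideal: the product of `𝔭^{v_𝔭(𝔞)}` over primes `𝔭 ∣ 𝔴`; applied to
`𝔞 = F_i(σ,τ)O_K` this is the ideal `𝔴_i`. -/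
def coflatPart (w a : Ideal (𝓞 K)) : Ideal (𝓞 K) :=
  ((normalizedFactors a).filter (fun p => p ∣ w)).prod

/-- The volume `ω*_ψ(X;v) = vol 𝒟*_ψ(X;v)`, where `𝒟*_ψ(X;v)` is the set of
`(s,t) ∈ X^{1/m}𝒟` with `𝔑(F_i(s,t)) ≥ ψ_i v_i √(Y_i) 𝔑𝔴_i` for all `i` (with
`Y_i = c_i X^{d_i}`) and `|H_w(s_w,t_w)|_w ≥ 1` for all `w ∈ Ω_∞` and `H_w ∈ ℋ_w`. -/
def omegaStar {n : ℕ} {𝔯 : Ideal (𝓞 K)} (S : SystemOfForms K n) (P : Triplet K 𝔯)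
    (Hr : {w : InfinitePlace K // w.IsReal} → Finset (MvPolynomial (Fin 2) ℝ))
    (Hc : {w : InfinitePlace K // w.IsComplex} → Finset (MvPolynomial (Fin 2) ℂ))
    (c : Fin n → ℝ) (ψ : Fin n → Bool) (X : ℝ) (v : Fin n → ℝ) : ℝ :=
  (volume {p : KInfty K × KInfty K |
      p ∈ (X ^ ((1 : ℝ) / (Module.finrank ℚ K))) • P.box.D ∧
      (∀ i, (if ψ i then
          v i * Real.sqrt (c i * X ^ (S.dF i)) *
            (Ideal.absNorm (coflatPart K P.w
              (Ideal.span {evalForm K (S.F i) P.σ P.τ})) : ℝ)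
        else 0) ≤ normInfty K (evalAtPlaces K (S.F i) p.1 p.2)) ∧
      (∀ w, ∀ H ∈ Hr w, 1 ≤ |MvPolynomial.eval ![p.1.1 w, p.2.1 w] H|) ∧
      (∀ w, ∀ H ∈ Hc w, 1 ≤ ‖MvPolynomial.eval ![p.1.2 w, p.2.2 w] H‖)}).toReal

end

/-! ### Lower bounds for binary forms -/

noncomputable section

open scoped ENNReal

theorem eval_scale {R : Type*} [CommRing R] {H : MvPolynomial (Fin 2) R} {e : ℕ}
    (hH : H.IsHomogeneous e) (c s t : R) :
    MvPolynomial.eval ![c * s, c * t] H = c ^ e * MvPolynomial.eval ![s, t] H := by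
  rw [MvPolynomial.eval_eq', MvPolynomial.eval_eq', Finset.mul_sum]
  refine Finset.sum_congr rfl fun d hd => ?_
  have h1 := hH (MvPolynomial.mem_support_iff.mp hd)
  have h2 : d 0 + d 1 = e := by
    rw [← h1]; simp [Finsupp.weight_apply, Finsupp.sum_fintype]
  rw [← h2]
  simp only [Fin.prod_univ_two, Matrix.cons_val_zero, Matrix.cons_val_one]
  ring

/-- A nonzero binary form over `ℂ` splits into linear factors `s - ρ t` and powers of `t`: the
roots `ρ` are those of the dehomogenisation `H(y, 1)`, and `t` takes up the drop in degree. -/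
theorem complex_factor {H : MvPolynomial (Fin 2) ℂ} {e : ℕ}
    (hH : H.IsHomogeneous e) (h0 : H ≠ 0) :
    ∃ b : ℂ, b ≠ 0 ∧ ∃ r : Multiset ℂ, r.card ≤ e ∧ ∀ s t : ℂ,
      MvPolynomial.eval ![s, t] H = b * t ^ (e - r.card) * (r.map fun ρ => s - ρ * t).prod := by
  set p : Polynomial ℂ := MvPolynomial.aeval ![Polynomial.X, 1] H with hp
  have hev : ∀ y, p.eval y = MvPolynomial.eval ![y, 1] H := by
    intro y
    have h := MvPolynomial.map_aeval (R := ℂ) (S₁ := Polynomial ℂ) ![Polynomial.X, 1]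
      (Polynomial.evalRingHom y) H
    rw [hp, ← Polynomial.coe_evalRingHom, h, MvPolynomial.eval, MvPolynomial.coe_eval₂Hom]
    congr 1
    · ext <;> simp
    · ext i; fin_cases i <;> simp
  have hscale : ∀ s t : ℂ, t ≠ 0 → MvPolynomial.eval ![s, t] H = t ^ e * p.eval (s / t) := by
    intro s t ht
    rw [hev, ← eval_scale hH]
    congr 2
    ext i; fin_cases i <;> simp [mul_div_cancel₀, ht]
  -- Two forms agreeing off the line `t = 0` agree after multiplication by `t`.
  have hcancel : ∀ G : MvPolynomial (Fin 2) ℂ,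
      (∀ s t : ℂ, t ≠ 0 → MvPolynomial.eval ![s, t] H = MvPolynomial.eval ![s, t] G) → H = G := by
    intro G hG
    have h : H * X 1 = G * X 1 := by
      refine MvPolynomial.funext fun x => ?_
      have hx : x = ![x 0, x 1] := by ext i; fin_cases i <;> rfl
      rcases eq_or_ne (x 1) 0 with h | h
      · simp [h]
      · have := hG (x 0) (x 1) h
        rw [← hx] at this
        simp [this]
    exact mul_right_cancel₀ (MvPolynomial.X_ne_zero 1) h
  have hp0 : p ≠ 0 := by
    intro h
    exact h0 (hcancel 0 fun s t ht => by rw [hscale s t ht, h]; simp)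
  have hdeg : p.natDegree ≤ e := by
    have := MvPolynomial.aeval_natDegree_le (n := 1) H hH.totalDegree_le ![Polynomial.X, 1]
      (fun i => by fin_cases i <;> simp)
    simpa using this
  have hsp := IsAlgClosed.splits p
  have hcard : p.roots.card = p.natDegree := hsp.natDegree_eq_card_roots.symm
  refine ⟨p.leadingCoeff, Polynomial.leadingCoeff_ne_zero.mpr hp0, p.roots, hcard ▸ hdeg, ?_⟩
  have key : H = C p.leadingCoeff * X 1 ^ (e - p.roots.card) *
      (p.roots.map fun ρ => X 0 - C ρ * X 1).prod := by
    refine hcancel _ fun s t ht => ?_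
    rw [hscale s t ht]
    conv_lhs => rw [hsp.eq_prod_roots]
    simp only [map_mul, map_pow, map_multiset_prod, Multiset.map_map, Function.comp_def,
      Polynomial.eval_mul, Polynomial.eval_C, Polynomial.eval_multiset_prod, map_sub, eval_C,
      eval_X, Polynomial.eval_sub, Polynomial.eval_X, Matrix.cons_val_zero, Matrix.cons_val_one]
    have : (p.roots.map fun ρ => s - ρ * t) = p.roots.map fun ρ => t * (s / t - ρ) := by
      refine Multiset.map_congr rfl fun ρ _ => ?_
      field_simp
    rw [this, Multiset.prod_map_mul, Multiset.map_const', Multiset.prod_replicate]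
    rw [show t ^ e = t ^ (e - p.roots.card) * t ^ p.roots.card by
      rw [← pow_add, Nat.sub_add_cancel (hcard ▸ hdeg)]]
    ring
  intro s t
  conv_lhs => rw [key]
  simp [map_multiset_prod, Multiset.map_map, Function.comp_def]

/-- The smallest factor, raised to the number of factors, is at most the product. -/
theorem exists_pow_card_le_prod (M : Multiset NNReal) (hM : M ≠ 0) :
    ∃ x ∈ M, x ^ M.card ≤ M.prod := by
  obtain ⟨x, hx, hmin⟩ := M.toFinset.exists_min_image id
    (by simpa [Finset.nonempty_iff_ne_empty] using hM)
  exact ⟨x, by simpa using hx, Multiset.pow_card_le_prod fun y hy => hmin y (by simpa using hy)⟩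

/-- `HasSmallFactor H e`: at every point the binary form `H`, of degree `e`, is at least a constant
times the `e`-th power of one of its normalised linear factors `s - ρ t` or `t`. Over `ℂ` this is
the smallest factor; over `ℝ` the `ρ` are the real parts of the complex roots, so that no
splitting of `H` is needed. The factor `t` may only be used when it divides `H`, that is, when
`H(1, 0) = 0`. -/
def HasSmallFactor {𝕜 : Type*} [NormedField 𝕜] (H : MvPolynomial (Fin 2) 𝕜) (e : ℕ) : Prop :=
  ∃ b : ℝ, 0 < b ∧ ∃ r : Finset 𝕜, ∀ s t : 𝕜,
    (∃ ρ ∈ r, b * ‖s - ρ * t‖ ^ e ≤ ‖MvPolynomial.eval ![s, t] H‖) ∨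
    (MvPolynomial.eval ![1, 0] H = 0 ∧ b * ‖t‖ ^ e ≤ ‖MvPolynomial.eval ![s, t] H‖)

theorem hasSmallFactor_complex {H : MvPolynomial (Fin 2) ℂ} {e : ℕ}
    (hH : H.IsHomogeneous e) (h0 : H ≠ 0) (he : 1 ≤ e) : HasSmallFactor H e := by
  obtain ⟨b, hb, r, hr, h⟩ := complex_factor hH h0
  refine ⟨‖b‖, norm_pos_iff.mpr hb, r.toFinset, fun s t => ?_⟩
  -- The absolute values of all `e` linear factors.
  set M : Multiset NNReal :=
    Multiset.replicate (e - r.card) ‖t‖₊ + r.map (fun ρ => ‖s - ρ * t‖₊) with hM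
  have hc : M.card = e := by simp [hM, hr]
  obtain ⟨x, hx, hxle⟩ := exists_pow_card_le_prod M (by
    rw [← Multiset.card_pos, hc]; exact he)
  have hnorm : ‖MvPolynomial.eval ![s, t] H‖₊ = ‖b‖₊ * M.prod := by
    rw [h, nnnorm_mul, nnnorm_mul, nnnorm_pow, hM, Multiset.prod_add, Multiset.prod_replicate,
      mul_assoc]
    congr 2
    have := map_multiset_prod (nnnormHom (α := ℂ)) (r.map fun ρ => s - ρ * t)
    simpa [Multiset.map_map, Function.comp_def] using this
  have hle : ‖b‖₊ * x ^ e ≤ ‖MvPolynomial.eval ![s, t] H‖₊ := by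
    rw [hnorm, ← hc]; gcongr
  rw [hM, Multiset.mem_add] at hx
  rcases hx with hx | hx
  · right
    obtain ⟨hne, rfl⟩ := Multiset.mem_replicate.mp hx
    refine ⟨?_, by exact_mod_cast hle⟩
    rw [h, zero_pow hne]; simp
  · left
    obtain ⟨ρ, hρ, rfl⟩ := Multiset.mem_map.mp hx
    exact ⟨ρ, by simpa using hρ, by exact_mod_cast hle⟩

/-- The real case follows from the complex one, since `|s - (Re ρ) t| ≤ |s - ρ t|` for real
`s` and `t`. -/
theorem hasSmallFactor_real {H : MvPolynomial (Fin 2) ℝ} {e : ℕ}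
    (hH : H.IsHomogeneous e) (h0 : H ≠ 0) (he : 1 ≤ e) : HasSmallFactor H e := by
  have hev : ∀ s t : ℝ, MvPolynomial.eval ![(s : ℂ), (t : ℂ)] (H.map Complex.ofRealHom)
      = ((MvPolynomial.eval ![s, t] H : ℝ) : ℂ) := by
    intro s t
    have hv : (![(s : ℂ), (t : ℂ)] : Fin 2 → ℂ) = fun i => Complex.ofRealHom (![s, t] i) := by
      ext i; fin_cases i <;> simp
    rw [hv]
    exact (MvPolynomial.map_eval Complex.ofRealHom ![s, t] H).symm
  obtain ⟨b, hb, r, h⟩ := hasSmallFactor_complex (hH.map Complex.ofRealHom)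
    (by simpa using (MvPolynomial.map_injective _ Complex.ofRealHom.injective).ne h0) he
  refine ⟨b, hb, r.image Complex.re, fun s t => ?_⟩
  have h1 := h s t
  have h10 := hev 1 0
  rw [Complex.ofReal_one, Complex.ofReal_zero] at h10
  rw [hev, h10, Complex.norm_real, Complex.norm_real, Complex.ofReal_eq_zero] at h1
  refine h1.imp_left ?_
  rintro ⟨ρ, hρ, hle⟩
  refine ⟨ρ.re, Finset.mem_image_of_mem _ hρ, le_trans ?_ hle⟩
  have : ‖s - ρ.re * t‖ ≤ ‖(s : ℂ) - ρ * t‖ := by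
    have := Complex.abs_re_le_norm ((s : ℂ) - ρ * t)
    simpa using this
  gcongr

/-! ### Integrals and volumes by slicing -/

theorem lintegral_fin_prod_eq_prod {n : ℕ} {E : Type*} [MeasureSpace E]
    [SigmaFinite (volume : Measure E)] (f : Fin n → E → ℝ≥0∞) (hf : ∀ i, Measurable (f i)) :
    ∫⁻ x : Fin n → E, ∏ i, f i (x i) = ∏ i, ∫⁻ x, f i x := by
  induction n with
  | zero => simp [volume_pi]
  | succ n ih =>
    have hm : Measurable fun x : Fin n → E => ∏ i : Fin n, f i.succ (x i) :=
      Finset.measurable_prod _ fun i _ => (hf _).comp (measurable_pi_apply i)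
    have h := (volume_preserving_piFinSuccAbove (fun _ : Fin (n + 1) => E) 0).lintegral_comp
      (f := fun p : E × (Fin n → E) => f 0 p.1 * ∏ i : Fin n, f i.succ (p.2 i))
      (((hf 0).comp measurable_fst).mul (hm.comp measurable_snd))
    rw [Fin.prod_univ_succ, ← ih _ fun i => hf _,
      ← lintegral_prod_mul (hf 0).aemeasurable hm.aemeasurable]
    refine Eq.trans (lintegral_congr fun x => ?_) h
    rw [Fin.prod_univ_succ]
    rfl

theorem lintegral_fintype_prod_eq_prod {ι : Type*} [Fintype ι] {E : Type*} [MeasureSpace E]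
    [SigmaFinite (volume : Measure E)] (f : ι → E → ℝ≥0∞) (hf : ∀ i, Measurable (f i)) :
    ∫⁻ x : ι → E, ∏ i, f i (x i) = ∏ i, ∫⁻ x, f i x := by
  let e := (Fintype.equivFin ι).symm
  rw [volume_pi, ← (measurePreserving_piCongrLeft (fun _ : ι => (volume : Measure E)) e).lintegral_comp_emb
    (MeasurableEquiv.measurableEmbedding _)]
  simp_rw [← e.prod_comp, MeasurableEquiv.coe_piCongrLeft, Equiv.piCongrLeft_apply_apply]
  exact lintegral_fin_prod_eq_prod _ fun i => hf _

/-- Chebyshev's inequality combined with Tonelli's theorem. If on `S` a constant `c` times a product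
of functions, one for each coordinate pair `(s_w, t_w)`, is at least `1`, and each of these functions
has a partial integral over `s_w` bounded uniformly in `t_w`, then `S` has volume at most `c` times
the product of these bounds times the volume of the range `B` of the variable `t`. The set `S` need
not be measurable. -/
theorem measure_le_of_slices {ι κ : Type*} [Fintype ι] [Fintype κ]
    {B : Set ((ι → ℝ) × (κ → ℂ))} (hB : MeasurableSet B)
    {S : Set (((ι → ℝ) × (κ → ℂ)) × ((ι → ℝ) × (κ → ℂ)))} (c : ℝ≥0∞)
    {f : ι → ℝ → ℝ → ℝ≥0∞} (hf : ∀ i, Measurable (Function.uncurry (f i)))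
    {g : κ → ℂ → ℂ → ℝ≥0∞} (hg : ∀ i, Measurable (Function.uncurry (g i)))
    {a : ι → ℝ≥0∞} (ha : ∀ i t, ∫⁻ x, f i x t ≤ a i)
    {b : κ → ℝ≥0∞} (hb : ∀ i t, ∫⁻ x, g i x t ≤ b i)
    (hS : ∀ p ∈ S, p.2 ∈ B ∧
      1 ≤ c * ((∏ i, f i (p.1.1 i) (p.2.1 i)) * ∏ i, g i (p.1.2 i) (p.2.2 i))) :
    volume S ≤ c * ((∏ i, a i) * ∏ i, b i) * volume B := by
  set F : ((ι → ℝ) × (κ → ℂ)) × ((ι → ℝ) × (κ → ℂ)) → ℝ≥0∞ := fun p =>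
    B.indicator 1 p.2 *
      (c * ((∏ i, f i (p.1.1 i) (p.2.1 i)) * ∏ i, g i (p.1.2 i) (p.2.2 i))) with hF
  have hFm : Measurable F := by
    refine Measurable.mul ((measurable_one.indicator hB).comp measurable_snd)
      (Measurable.const_mul (Measurable.mul ?_ ?_) _)
    · refine Finset.measurable_prod _ fun i _ => (hf i).comp
        (f := fun p : ((ι → ℝ) × (κ → ℂ)) × ((ι → ℝ) × (κ → ℂ)) => (p.1.1 i, p.2.1 i))
        (by fun_prop)
    · refine Finset.measurable_prod _ fun i _ => (hg i).comp
        (f := fun p : ((ι → ℝ) × (κ → ℂ)) × ((ι → ℝ) × (κ → ℂ)) => (p.1.2 i, p.2.2 i))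
        (by fun_prop)
  have h1 : volume S ≤ ∫⁻ p, F p := by
    have h2 : S ⊆ {p | 1 ≤ F p} := fun p hp => by
      obtain ⟨hpB, h⟩ := hS p hp
      simpa [hF, hpB] using h
    refine (measure_mono h2).trans ?_
    simpa using mul_meas_ge_le_lintegral hFm 1
  refine h1.trans ?_
  rw [show (volume : Measure (((ι → ℝ) × (κ → ℂ)) × ((ι → ℝ) × (κ → ℂ)))) =
    (volume.prod volume) from rfl, lintegral_prod_symm _ hFm.aemeasurable]
  have h3 : ∀ y : (ι → ℝ) × (κ → ℂ), ∫⁻ x, F (x, y) ≤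
      B.indicator (fun _ => c * ((∏ i, a i) * ∏ i, b i)) y := by
    intro y
    have hfy : ∀ i, Measurable fun x => f i x (y.1 i) := fun i =>
      (hf i).comp (f := fun x => (x, y.1 i)) (by fun_prop)
    have hgy : ∀ i, Measurable fun x => g i x (y.2 i) := fun i =>
      (hg i).comp (f := fun x => (x, y.2 i)) (by fun_prop)
    have hfy' : Measurable fun x : ι → ℝ => ∏ i, f i (x i) (y.1 i) :=
      Finset.measurable_prod _ fun i _ => (hfy i).comp (measurable_pi_apply i)
    have hgy' : Measurable fun x : κ → ℂ => ∏ i, g i (x i) (y.2 i) :=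
      Finset.measurable_prod _ fun i _ => (hgy i).comp (measurable_pi_apply i)
    by_cases hy : y ∈ B
    · simp only [hF, hy, Set.indicator_of_mem, Pi.one_apply, one_mul]
      rw [lintegral_const_mul _ (by exact (hfy'.comp measurable_fst).mul (hgy'.comp measurable_snd))]
      rw [show (volume : Measure ((ι → ℝ) × (κ → ℂ))) = (volume.prod volume) from rfl,
        lintegral_prod_mul hfy'.aemeasurable hgy'.aemeasurable,
        lintegral_fintype_prod_eq_prod _ hfy, lintegral_fintype_prod_eq_prod _ hgy]
      gcongr with i _ i _
      · exact ha i _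
      · exact hb i _
    · simp [hF, hy]
  refine (lintegral_mono h3).trans ?_
  rw [lintegral_indicator hB, setLIntegral_const]

/-- The version of `measure_le_of_slices` for indicator functions. -/
theorem measure_le_of_slices_set {ι κ : Type*} [Fintype ι] [Fintype κ]
    {B : Set ((ι → ℝ) × (κ → ℂ))} (hB : MeasurableSet B)
    {S : Set (((ι → ℝ) × (κ → ℂ)) × ((ι → ℝ) × (κ → ℂ)))}
    {f : ι → Set (ℝ × ℝ)} (hf : ∀ i, MeasurableSet (f i))
    {g : κ → Set (ℂ × ℂ)} (hg : ∀ i, MeasurableSet (g i))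
    {a : ι → ℝ≥0∞} (ha : ∀ i t, volume {x | (x, t) ∈ f i} ≤ a i)
    {b : κ → ℝ≥0∞} (hb : ∀ i t, volume {x | (x, t) ∈ g i} ≤ b i)
    (hS : ∀ p ∈ S, p.2 ∈ B ∧ (∀ i, (p.1.1 i, p.2.1 i) ∈ f i) ∧ ∀ i, (p.1.2 i, p.2.2 i) ∈ g i) :
    volume S ≤ ((∏ i, a i) * ∏ i, b i) * volume B := by
  have := measure_le_of_slices (S := S) hB 1
    (f := fun i x t => (f i).indicator 1 (x, t)) (g := fun i x t => (g i).indicator 1 (x, t))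
    (fun i => measurable_one.indicator (hf i)) (fun i => measurable_one.indicator (hg i))
    (a := a) (b := b) (fun i t => ?_) (fun i t => ?_) (fun p hp => ?_)
  · simpa using this
  · refine le_trans (le_of_eq ?_) (ha i t)
    exact lintegral_indicator_one (measurable_prodMk_right (hf i))
  · refine le_trans (le_of_eq ?_) (hb i t)
    exact lintegral_indicator_one (measurable_prodMk_right (hg i))
  · obtain ⟨h1, h2, h3⟩ := hS p hp
    exact ⟨h1, by simp [h2, h3]⟩

/-- The kernel `‖x - a‖^(-β)` with `β` below the dimension is integrable over a fixed ball,
uniformly in the position of the singularity `a`: split at distance `1` from `a`. -/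
theorem lintegral_kernel_le {E : Type*} [NormedAddCommGroup E] [NormedSpace ℝ E]
    [FiniteDimensional ℝ E] [MeasureSpace E] [BorelSpace E]
    [(volume : Measure E).IsAddHaarMeasure] (hE : 0 < Module.finrank ℝ E)
    {β : ℝ} (hβ0 : 0 ≤ β) (hβ : β < Module.finrank ℝ E) (R : ℝ) :
    ∃ A : NNReal, ∀ a : E, ∫⁻ x in Metric.closedBall (0 : E) R, (‖x - a‖ₑ ^ β)⁻¹ ≤ A := by
  have : Nontrivial E := Module.finrank_pos_iff.mp hE
  have hfin : ∫⁻ x in Metric.ball (0 : E) 1, (‖x‖ₑ ^ β)⁻¹ < ∞ := by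
    have h1 : IntegrableOn (fun x : E => ‖x‖ ^ (-β)) (Metric.ball (0 : E) 1) := by
      rw [integrableOn_fun_norm_addHaar volume (f := fun y : ℝ => y ^ (-β))]
      have h2 : IntegrableOn (fun y : ℝ => y ^ ((Module.finrank ℝ E : ℝ) - 1 - β)) (Set.Ioo 0 1) :=
        (intervalIntegral.integrableOn_Ioo_rpow_iff one_pos).mpr (by linarith)
      refine h2.congr_fun (fun y hy => ?_) measurableSet_Ioo
      have : ((Module.finrank ℝ E : ℝ) - 1) = ((Module.finrank ℝ E - 1 : ℕ) : ℝ) := by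
        rw [Nat.cast_sub hE]; simp
      simp only [smul_eq_mul]
      rw [this, sub_eq_add_neg, Real.rpow_add hy.1, Real.rpow_natCast]
    refine lt_of_le_of_lt (le_of_eq ?_) h1.2
    refine lintegral_congr_ae ?_
    have h0 : ∀ᵐ x ∂(volume.restrict (Metric.ball (0 : E) 1)), x ≠ 0 :=
      ae_restrict_of_ae (by simp [ae_iff])
    filter_upwards [h0] with x hx
    have hx' : 0 < ‖x‖ := norm_pos_iff.mpr hx
    rw [← ofReal_norm, ENNReal.ofReal_rpow_of_pos hx',
      ← ENNReal.ofReal_inv_of_pos (by positivity), Real.rpow_neg hx'.le,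
      ← ofReal_norm, Real.norm_of_nonneg (by positivity)]
  have hV : volume (Metric.closedBall (0 : E) R) < ∞ := measure_closedBall_lt_top
  lift volume (Metric.closedBall (0 : E) R) to NNReal using hV.ne with V hV'
  lift ∫⁻ x in Metric.ball (0 : E) 1, (‖x‖ₑ ^ β)⁻¹ to NNReal using hfin.ne with J hJ
  refine ⟨V + J, fun a => ?_⟩
  have hm : Measurable fun x : E => (Metric.ball (0 : E) 1).indicator (fun x => (‖x‖ₑ ^ β)⁻¹) x :=
    Measurable.indicator (by fun_prop) measurableSet_ball
  calc ∫⁻ x in Metric.closedBall (0 : E) R, (‖x - a‖ₑ ^ β)⁻¹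
      ≤ ∫⁻ x in Metric.closedBall (0 : E) R,
          (1 + (Metric.ball (0 : E) 1).indicator (fun x => (‖x‖ₑ ^ β)⁻¹) (x - a)) := by
        refine lintegral_mono fun x => ?_
        by_cases hx : x - a ∈ Metric.ball (0 : E) 1
        · simp [Set.indicator_of_mem hx]
        · rw [Set.indicator_of_notMem hx, add_zero]
          rw [mem_ball_zero_iff, not_lt] at hx
          refine ENNReal.inv_le_one.mpr ?_
          have h1 : (1 : ℝ≥0∞) ≤ ‖x - a‖ₑ := by rw [← ofReal_norm]; simpa [-ofReal_norm] using hx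
          simpa using ENNReal.rpow_le_rpow h1 hβ0
    _ ≤ V + J := by
        rw [lintegral_add_left measurable_const, setLIntegral_const, one_mul, ← hV']
        gcongr
        refine (setLIntegral_le_lintegral _ _).trans ?_
        rw [lintegral_sub_right_eq_self (μ := volume)
          (fun x => (Metric.ball (0 : E) 1).indicator (fun x => (‖x‖ₑ ^ β)⁻¹) x) a,
          lintegral_indicator measurableSet_ball, hJ]

/-- If `H(1, 0) ≠ 0`, the partial integral of `‖H(s, t)‖^(-α)` over `s` in a ball is bounded
uniformly in `t`, provided that `d α` is below the dimension: the integrand is dominated by a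
finite sum of kernels with singularities at `s = ρ t`. -/
theorem lintegral_form_le {𝕜 : Type*} [NormedField 𝕜] [NormedSpace ℝ 𝕜]
    [FiniteDimensional ℝ 𝕜] [MeasureSpace 𝕜] [BorelSpace 𝕜]
    [(volume : Measure 𝕜).IsAddHaarMeasure]
    {H : MvPolynomial (Fin 2) 𝕜} {d : ℕ} (hH : HasSmallFactor H d)
    (h10 : MvPolynomial.eval ![1, 0] H ≠ 0)
    {α : ℝ} (hα0 : 0 ≤ α) (hα : d * α < Module.finrank ℝ 𝕜) (R : ℝ) :
    ∃ A : NNReal, ∀ t : 𝕜, ∫⁻ x in Metric.closedBall (0 : 𝕜) R,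
      (‖MvPolynomial.eval ![x, t] H‖ₑ ^ α)⁻¹ ≤ A := by
  obtain ⟨b, hb, r, h⟩ := hH
  have hk : 0 < Module.finrank ℝ 𝕜 := Module.finrank_pos
  obtain ⟨A, hA⟩ := lintegral_kernel_le (E := 𝕜) hk (β := d * α) (by positivity) hα R
  have hb' : ENNReal.ofReal b ≠ 0 := by simpa using hb
  have hbα : (ENNReal.ofReal b ^ α)⁻¹ ≠ ∞ := by
    simp [ENNReal.rpow_eq_zero_iff, hb']
  lift (ENNReal.ofReal b ^ α)⁻¹ to NNReal using hbα with β hβ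
  refine ⟨r.card * (β * A), fun t => ?_⟩
  have hpt : ∀ x : 𝕜, (‖MvPolynomial.eval ![x, t] H‖ₑ ^ α)⁻¹ ≤
      ∑ ρ ∈ r, β * (‖x - ρ * t‖ₑ ^ (d * α))⁻¹ := by
    intro x
    rcases h x t with ⟨ρ, hρ, hle⟩ | ⟨h0, -⟩
    · refine le_trans ?_ (Finset.single_le_sum
        (f := fun ρ : 𝕜 => (β : ℝ≥0∞) * (‖x - ρ * t‖ₑ ^ (d * α))⁻¹)
        (fun _ _ => zero_le) hρ : _ ≤ ∑ ρ ∈ r, (β : ℝ≥0∞) * (‖x - ρ * t‖ₑ ^ (d * α))⁻¹)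
      have h1 : ENNReal.ofReal b * ‖x - ρ * t‖ₑ ^ d ≤ ‖MvPolynomial.eval ![x, t] H‖ₑ := by
        rw [← ofReal_norm, ← ofReal_norm, ← ENNReal.ofReal_pow (norm_nonneg _),
          ← ENNReal.ofReal_mul hb.le]
        exact ENNReal.ofReal_le_ofReal hle
      rw [hβ, ENNReal.rpow_mul, ENNReal.rpow_natCast, ← ENNReal.mul_inv, ENNReal.inv_le_inv,
        ← ENNReal.mul_rpow_of_nonneg _ _ hα0]
      · exact ENNReal.rpow_le_rpow h1 hα0
      · left; simp [ENNReal.rpow_eq_zero_iff, hb']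
      · left; exact ENNReal.rpow_ne_top_of_nonneg hα0 ENNReal.ofReal_ne_top
    · exact absurd h0 h10
  refine (lintegral_mono hpt).trans ?_
  rw [lintegral_finsetSum _ fun ρ _ => by fun_prop]
  have hρ : ∀ ρ ∈ r, ∫⁻ x in Metric.closedBall (0 : 𝕜) R,
      (β : ℝ≥0∞) * (‖x - ρ * t‖ₑ ^ (d * α))⁻¹ ≤ β * A := fun ρ _ => by
    rw [lintegral_const_mul _ (by fun_prop)]
    gcongr
    exact hA _
  refine (Finset.sum_le_sum hρ).trans ?_
  rw [Finset.sum_const, nsmul_eq_mul]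
  push_cast
  exact le_rfl

/-! ### Regions where forms are small -/

/-- `VolBound g S`: the volume of `S T` is `O(g T)`, uniformly in `T ≥ 1`. The sets need not be
measurable: for them `volume` is the outer measure. -/
def VolBound {Ω : Type*} [MeasureSpace Ω] (g : ℝ → ℝ≥0∞) (S : ℝ → Set Ω) : Prop :=
  ∃ C : NNReal, ∀ T : ℝ, 1 ≤ T → volume (S T) ≤ C * g T

theorem VolBound.mono {Ω : Type*} [MeasureSpace Ω] {g g' : ℝ → ℝ≥0∞} {S S' : ℝ → Set Ω}
    (h : VolBound g S) (hg : ∀ T, 1 ≤ T → g T ≤ g' T) (hS : ∀ T, 1 ≤ T → S' T ⊆ S T) :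
    VolBound g' S' := by
  obtain ⟨C, hC⟩ := h
  refine ⟨C, fun T hT => (measure_mono (hS T hT)).trans ((hC T hT).trans ?_)⟩
  gcongr
  exact hg T hT

theorem VolBound.union {Ω : Type*} [MeasureSpace Ω] {g : ℝ → ℝ≥0∞} {S S' : ℝ → Set Ω}
    (h : VolBound g S) (h' : VolBound g S') : VolBound g (fun T => S T ∪ S' T) := by
  obtain ⟨C, hC⟩ := h
  obtain ⟨C', hC'⟩ := h'
  refine ⟨C + C', fun T hT => (measure_union_le _ _).trans ?_⟩
  push_cast
  rw [add_mul]
  exact add_le_add (hC T hT) (hC' T hT)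

theorem VolBound.biUnion {Ω ι : Type*} [MeasureSpace Ω] {g : ℝ → ℝ≥0∞} {S : ι → ℝ → Set Ω}
    (s : Finset ι) (h : ∀ i ∈ s, VolBound g (S i)) : VolBound g (fun T => ⋃ i ∈ s, S i T) := by
  induction s using Finset.induction_on with
  | empty => exact ⟨0, fun T _ => by simp⟩
  | insert a s _ ih =>
    simp only [Finset.set_biUnion_insert]
    exact (h a (Finset.mem_insert_self _ _)).union
      (ih fun i hi => h i (Finset.mem_insert_of_mem hi))

section pieces
variable {ι κ : Type*} [Fintype ι] [Fintype κ]

theorem finite_ball_const (B : ℝ≥0∞) (hB : B < ∞) : ∃ C : NNReal, B ≤ C :=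
  ⟨B.toNNReal, by rw [ENNReal.coe_toNNReal hB.ne]⟩

/-- The part of a ball where `|s_w - ρ t_w|` is at most `η` at a real place has volume `O(η)`. -/
theorem linear_piece_real (R : ℝ) (w : ι) (ρ : ℝ) : ∃ C : NNReal, ∀ η : ℝ, 0 ≤ η →
    volume {p : ((ι → ℝ) × (κ → ℂ)) × ((ι → ℝ) × (κ → ℂ)) |
      p ∈ Metric.closedBall 0 R ∧ ‖p.1.1 w - ρ * p.2.1 w‖ ≤ η} ≤ C * ENNReal.ofReal η := by
  set V := volume (Metric.closedBall (0 : ℝ) R)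
  set W := volume (Metric.closedBall (0 : ℂ) R)
  set U := volume (Metric.closedBall (0 : (ι → ℝ) × (κ → ℂ)) R)
  have hV : V < ∞ := measure_closedBall_lt_top
  have hW : W < ∞ := measure_closedBall_lt_top
  have hU : U < ∞ := measure_closedBall_lt_top
  obtain ⟨C, hC⟩ := finite_ball_const ((∏ _i : ι, (2 + V)) * (∏ _i : κ, W) * U) (by
    refine ENNReal.mul_lt_top (ENNReal.mul_lt_top ?_ ?_) hU
    · exact ENNReal.prod_lt_top fun _ _ => ENNReal.add_lt_top.mpr ⟨by simp, hV⟩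
    · exact ENNReal.prod_lt_top fun _ _ => hW)
  refine ⟨C, fun η hη => ?_⟩
  have := measure_le_of_slices_set (ι := ι) (κ := κ)
    (S := {p | p ∈ Metric.closedBall 0 R ∧ ‖p.1.1 w - ρ * p.2.1 w‖ ≤ η})
    (B := Metric.closedBall 0 R) measurableSet_closedBall
    (f := fun i => {q | ‖q.1‖ ≤ R ∧ (i = w → ‖q.1 - ρ * q.2‖ ≤ η)})
    (g := fun _ => {q | ‖q.1‖ ≤ R})
    (fun i => ?_) (fun i => measurableSet_le (measurable_norm.comp measurable_fst) measurable_const)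
    (a := fun i => (2 + V) * (if i = w then ENNReal.ofReal η else 1)) (fun i t => ?_)
    (b := fun _ => W) (fun i t => ?_) (fun p hp => ?_)
  · refine this.trans ?_
    rw [Finset.prod_mul_distrib, Finset.prod_ite_eq' Finset.univ w, if_pos (Finset.mem_univ _)]
    calc _ = ((∏ _i : ι, (2 + V)) * (∏ _i : κ, W) * U) * ENNReal.ofReal η := by ring
      _ ≤ _ := by gcongr
  · refine (measurableSet_le (measurable_norm.comp measurable_fst) measurable_const).inter ?_
    by_cases h : i = w
    · simp only [h, forall_const]
      exact measurableSet_le (by fun_prop) (by fun_prop)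
    · simp only [h, false_imp_iff]
      exact MeasurableSet.univ
  · by_cases h : i = w
    · simp only [h, if_true]
      calc _ ≤ volume (Metric.closedBall (ρ * t) η) := measure_mono fun x hx => by
            simpa [dist_eq_norm] using hx.2
        _ = 2 * ENNReal.ofReal η := by
            rw [Real.volume_closedBall, ENNReal.ofReal_mul two_pos.le]; simp
        _ ≤ _ := by gcongr; exact le_self_add
    · simp only [h, if_false, mul_one]
      calc _ ≤ V := measure_mono fun x hx => by simpa using hx.1
        _ ≤ _ := le_add_self
  · exact measure_mono fun x hx => by simpa using hx
  · obtain ⟨h1, h2⟩ := hp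
    rw [mem_closedBall_zero_iff] at h1
    have h3 := (norm_fst_le p).trans h1
    refine ⟨by simpa using (norm_snd_le p).trans h1, fun i => ⟨?_, ?_⟩, fun i => ?_⟩
    · exact (norm_le_pi_norm p.1.1 i).trans ((norm_fst_le p.1).trans h3)
    · rintro rfl; exact h2
    · exact (norm_le_pi_norm p.1.2 i).trans ((norm_snd_le p.1).trans h3)

/-- The part of a ball where `|s_w - ρ t_w|` is at most `η` at a complex place has volume `O(η²)`. -/
theorem linear_piece_complex (R : ℝ) (w : κ) (ρ : ℂ) : ∃ C : NNReal, ∀ η : ℝ, 0 ≤ η →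
    volume {p : ((ι → ℝ) × (κ → ℂ)) × ((ι → ℝ) × (κ → ℂ)) |
      p ∈ Metric.closedBall 0 R ∧ ‖p.1.2 w - ρ * p.2.2 w‖ ≤ η} ≤
        C * ENNReal.ofReal η ^ 2 := by
  set V := volume (Metric.closedBall (0 : ℝ) R)
  set W := volume (Metric.closedBall (0 : ℂ) R)
  set U := volume (Metric.closedBall (0 : (ι → ℝ) × (κ → ℂ)) R)
  have hV : V < ∞ := measure_closedBall_lt_top
  have hW : W < ∞ := measure_closedBall_lt_top
  have hU : U < ∞ := measure_closedBall_lt_top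
  obtain ⟨C, hC⟩ := finite_ball_const ((∏ _i : ι, V) * (∏ _i : κ, (NNReal.pi + W)) * U) (by
    refine ENNReal.mul_lt_top (ENNReal.mul_lt_top ?_ ?_) hU
    · exact ENNReal.prod_lt_top fun _ _ => hV
    · exact ENNReal.prod_lt_top fun _ _ => ENNReal.add_lt_top.mpr ⟨by simp, hW⟩)
  refine ⟨C, fun η hη => ?_⟩
  have := measure_le_of_slices_set (ι := ι) (κ := κ)
    (S := {p | p ∈ Metric.closedBall 0 R ∧ ‖p.1.2 w - ρ * p.2.2 w‖ ≤ η})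
    (B := Metric.closedBall 0 R) measurableSet_closedBall
    (f := fun _ => {q | ‖q.1‖ ≤ R})
    (g := fun i => {q | ‖q.1‖ ≤ R ∧ (i = w → ‖q.1 - ρ * q.2‖ ≤ η)})
    (fun i => measurableSet_le (measurable_norm.comp measurable_fst) measurable_const) (fun i => ?_)
    (a := fun _ => V) (fun i t => ?_)
    (b := fun i => (NNReal.pi + W) * (if i = w then ENNReal.ofReal η ^ 2 else 1)) (fun i t => ?_)
    (fun p hp => ?_)
  · refine this.trans ?_
    rw [Finset.prod_mul_distrib, Finset.prod_ite_eq' Finset.univ w, if_pos (Finset.mem_univ _)]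
    calc _ = ((∏ _i : ι, V) * (∏ _i : κ, (NNReal.pi + W)) * U) * ENNReal.ofReal η ^ 2 := by ring
      _ ≤ _ := by gcongr
  · refine (measurableSet_le (measurable_norm.comp measurable_fst) measurable_const).inter ?_
    by_cases h : i = w
    · simp only [h, forall_const]
      exact measurableSet_le (by fun_prop) (by fun_prop)
    · simp only [h, false_imp_iff]
      exact MeasurableSet.univ
  · exact measure_mono fun x hx => by simpa using hx
  · by_cases h : i = w
    · simp only [h, if_true]
      calc _ ≤ volume (Metric.closedBall (ρ * t) η) := measure_mono fun x hx => by
            simpa [dist_eq_norm] using hx.2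
        _ = NNReal.pi * ENNReal.ofReal η ^ 2 := by
            rw [Complex.volume_closedBall, mul_comm]
        _ ≤ _ := by gcongr; exact le_self_add
    · simp only [h, if_false, mul_one]
      calc _ ≤ W := measure_mono fun x hx => by simpa using hx.1
        _ ≤ _ := le_add_self
  · obtain ⟨h1, h2⟩ := hp
    rw [mem_closedBall_zero_iff] at h1
    have h3 := (norm_fst_le p).trans h1
    refine ⟨by simpa using (norm_snd_le p).trans h1, fun i => ?_, fun i => ⟨?_, ?_⟩⟩
    · exact (norm_le_pi_norm p.1.1 i).trans ((norm_fst_le p.1).trans h3)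
    · exact (norm_le_pi_norm p.1.2 i).trans ((norm_snd_le p.1).trans h3)
    · rintro rfl; exact h2

/-- Exchanging `s` and `t` preserves volume, which reduces the linear factor `t` to the
factor `s`. -/
theorem volume_swap (S : Set (((ι → ℝ) × (κ → ℂ)) × ((ι → ℝ) × (κ → ℂ)))) :
    volume (Prod.swap ⁻¹' S) = volume S :=
  (Measure.measurePreserving_swap (μ := (volume : Measure ((ι → ℝ) × (κ → ℂ))))
    (ν := (volume : Measure ((ι → ℝ) × (κ → ℂ))))).measure_preimage_emb
      MeasurableEquiv.prodComm.measurableEmbedding S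

theorem le_of_mul_pow_lt {b x : ℝ} {e : ℕ} (hb : 0 < b) (he : 1 ≤ e)
    (h : b * x ^ e < 1) : x ≤ max 1 b⁻¹ := by
  by_contra! hx
  have h1 : 1 < x := (le_max_left _ _).trans_lt hx
  have h2 : b⁻¹ < x := (le_max_right _ _).trans_lt hx
  have h3 : x ≤ x ^ e := le_self_pow₀ h1.le (by omega)
  have h4 : 1 < b * x := by
    calc 1 = b * b⁻¹ := by field_simp
      _ < _ := by gcongr
  nlinarith

/-- At a real place, a form of positive degree is below `1` at `(T s, T t)` only on a set of volume
`O(1 / T)` inside a fixed ball: some linear factor at `(s, t)` must be `O(1 / T)`. -/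
theorem form_piece_real (R : ℝ) (w : ι) {H : MvPolynomial (Fin 2) ℝ} {e : ℕ} (he : 1 ≤ e)
    (hH : HasSmallFactor H e) :
    VolBound (fun T => ENNReal.ofReal T⁻¹)
      (fun T => {p : ((ι → ℝ) × (κ → ℂ)) × ((ι → ℝ) × (κ → ℂ)) | p ∈ Metric.closedBall 0 R ∧
        ‖MvPolynomial.eval ![T * p.1.1 w, T * p.2.1 w] H‖ < 1}) := by
  obtain ⟨b, hb, r, h⟩ := hH
  set M : ℝ := max 1 b⁻¹
  have hM : 0 ≤ M := zero_le_one.trans (le_max_left _ _)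
  have h1 : ∀ ρ : ℝ, VolBound (fun T => ENNReal.ofReal T⁻¹)
      (fun T => {p : ((ι → ℝ) × (κ → ℂ)) × ((ι → ℝ) × (κ → ℂ)) | p ∈ Metric.closedBall 0 R ∧
        ‖p.1.1 w - ρ * p.2.1 w‖ ≤ M / T}) := by
    intro ρ
    obtain ⟨C, hC⟩ := linear_piece_real (κ := κ) R w ρ
    refine ⟨C * M.toNNReal, fun T hT => (hC (M / T) (by positivity)).trans (le_of_eq ?_)⟩
    rw [div_eq_mul_inv, ENNReal.ofReal_mul hM, ENNReal.coe_mul, mul_assoc]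
    rfl
  have h2 : VolBound (fun T => ENNReal.ofReal T⁻¹)
      (fun T => {p : ((ι → ℝ) × (κ → ℂ)) × ((ι → ℝ) × (κ → ℂ)) | p ∈ Metric.closedBall 0 R ∧
        ‖p.2.1 w‖ ≤ M / T}) := by
    obtain ⟨C, hC⟩ := h1 0
    refine ⟨C, fun T hT => le_trans ?_ (hC T hT)⟩
    rw [← volume_swap]
    refine measure_mono fun p hp => ?_
    simpa [Prod.norm_def, and_comm] using hp
  refine ((VolBound.biUnion r fun ρ _ => h1 ρ).union h2).mono (fun _ _ => le_rfl) ?_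
  rintro T hT p ⟨hp, hlt⟩
  have hT0 : 0 < T := by linarith
  rcases h (T * p.1.1 w) (T * p.2.1 w) with ⟨ρ, hρ, hle⟩ | ⟨-, hle⟩
  · left
    simp only [Set.mem_iUnion]
    refine ⟨ρ, hρ, hp, ?_⟩
    have := le_of_mul_pow_lt hb he (hle.trans_lt hlt)
    rw [show T * p.1.1 w - ρ * (T * p.2.1 w) = T * (p.1.1 w - ρ * p.2.1 w) by ring, norm_mul,
      Real.norm_of_nonneg hT0.le] at this
    rw [le_div_iff₀ hT0, mul_comm]; exact this
  · right
    refine ⟨hp, ?_⟩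
    have := le_of_mul_pow_lt hb he (hle.trans_lt hlt)
    rw [norm_mul, Real.norm_of_nonneg hT0.le] at this
    rw [le_div_iff₀ hT0, mul_comm]; exact this

/-- The analogue of `form_piece_real` at a complex place, where the volume is even `O(1 / T²)`;
`O(1 / T)` is enough. -/
theorem form_piece_complex (R : ℝ) (w : κ) {H : MvPolynomial (Fin 2) ℂ} {e : ℕ} (he : 1 ≤ e)
    (hH : HasSmallFactor H e) :
    VolBound (fun T => ENNReal.ofReal T⁻¹)
      (fun T => {p : ((ι → ℝ) × (κ → ℂ)) × ((ι → ℝ) × (κ → ℂ)) | p ∈ Metric.closedBall 0 R ∧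
        ‖MvPolynomial.eval ![T * p.1.2 w, T * p.2.2 w] H‖ < 1}) := by
  obtain ⟨b, hb, r, h⟩ := hH
  set M : ℝ := max 1 b⁻¹
  have hM : 0 ≤ M := zero_le_one.trans (le_max_left _ _)
  have h1 : ∀ ρ : ℂ, VolBound (fun T => ENNReal.ofReal T⁻¹)
      (fun T => {p : ((ι → ℝ) × (κ → ℂ)) × ((ι → ℝ) × (κ → ℂ)) | p ∈ Metric.closedBall 0 R ∧
        ‖p.1.2 w - ρ * p.2.2 w‖ ≤ M / T}) := by
    intro ρ
    obtain ⟨C, hC⟩ := linear_piece_complex (ι := ι) R w ρ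
    refine ⟨C * M.toNNReal ^ 2, fun T hT => (hC (M / T) (by positivity)).trans ?_⟩
    rw [div_eq_mul_inv, ENNReal.ofReal_mul hM, ENNReal.coe_mul, mul_assoc, mul_pow,
      ENNReal.coe_pow]
    gcongr
    · exact le_rfl
    · refine pow_le_of_le_one zero_le ?_ two_ne_zero
      exact ENNReal.ofReal_le_one.mpr (inv_le_one_of_one_le₀ hT)
  have h2 : VolBound (fun T => ENNReal.ofReal T⁻¹)
      (fun T => {p : ((ι → ℝ) × (κ → ℂ)) × ((ι → ℝ) × (κ → ℂ)) | p ∈ Metric.closedBall 0 R ∧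
        ‖p.2.2 w‖ ≤ M / T}) := by
    obtain ⟨C, hC⟩ := h1 0
    refine ⟨C, fun T hT => le_trans ?_ (hC T hT)⟩
    rw [← volume_swap]
    refine measure_mono fun p hp => ?_
    simpa [Prod.norm_def, and_comm] using hp
  refine ((VolBound.biUnion r fun ρ _ => h1 ρ).union h2).mono (fun _ _ => le_rfl) ?_
  rintro T hT p ⟨hp, hlt⟩
  have hT0 : 0 < T := by linarith
  have hTn : ‖(T : ℂ)‖ = T := by rw [Complex.norm_real, Real.norm_of_nonneg hT0.le]
  rcases h (T * p.1.2 w) (T * p.2.2 w) with ⟨ρ, hρ, hle⟩ | ⟨-, hle⟩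
  · left
    simp only [Set.mem_iUnion]
    refine ⟨ρ, hρ, hp, ?_⟩
    have := le_of_mul_pow_lt hb he (hle.trans_lt hlt)
    rw [show T * p.1.2 w - ρ * (T * p.2.2 w) = T * (p.1.2 w - ρ * p.2.2 w) by ring, norm_mul,
      hTn] at this
    rw [le_div_iff₀ hT0, mul_comm]; exact this
  · right
    refine ⟨hp, ?_⟩
    have := le_of_mul_pow_lt hb he (hle.trans_lt hlt)
    rw [norm_mul, hTn] at this
    rw [le_div_iff₀ hT0, mul_comm]; exact this

/-- The part of a ball where a product of forms of degree `d`, one at each place and none vanishing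
at `(1, 0)`, is at most `δ` in norm has volume `O(δ ^ α)` for every `0 ≤ α < 1 / d`. Working with the product of the negative powers avoids any
decomposition according to the size of the individual factors, at the cost of the endpoint
`α = 1 / d`. -/
theorem norm_piece (R : ℝ) {d : ℕ} {α : ℝ} (hα0 : 0 ≤ α) (hα : d * α < 1)
    {F : ι → MvPolynomial (Fin 2) ℝ} {G : κ → MvPolynomial (Fin 2) ℂ}
    (hF : ∀ i, HasSmallFactor (F i) d) (hF0 : ∀ i, MvPolynomial.eval ![1, 0] (F i) ≠ 0)
    (hG : ∀ i, HasSmallFactor (G i) d) (hG0 : ∀ i, MvPolynomial.eval ![1, 0] (G i) ≠ 0) :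
    ∃ C : NNReal, ∀ δ : ℝ, 0 < δ →
      volume {p : ((ι → ℝ) × (κ → ℂ)) × ((ι → ℝ) × (κ → ℂ)) | p ∈ Metric.closedBall 0 R ∧
        (∏ i, |MvPolynomial.eval ![p.1.1 i, p.2.1 i] (F i)|) *
          ∏ i, ‖MvPolynomial.eval ![p.1.2 i, p.2.2 i] (G i)‖ ^ 2 ≤ δ} ≤
        C * ENNReal.ofReal (δ ^ α) := by
  choose A hA using fun i => lintegral_form_le (hF i) (hF0 i) hα0 (by simpa using hα) R
  choose B hB using fun i => lintegral_form_le (hG i) (hG0 i) (α := 2 * α) (by positivity)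
    (by simp; linarith) R
  set U := volume (Metric.closedBall (0 : (ι → ℝ) × (κ → ℂ)) R)
  have hU : U < ∞ := measure_closedBall_lt_top
  lift U to NNReal using hU.ne with U' hU'
  have hm : ∀ {𝕜 : Type} [NormedField 𝕜] [MeasurableSpace 𝕜] [BorelSpace 𝕜]
      [SecondCountableTopology 𝕜] (H : MvPolynomial (Fin 2) 𝕜) (α : ℝ),
      Measurable (Function.uncurry fun x t : 𝕜 => (Metric.closedBall (0 : 𝕜) R).indicator
        (fun x => (‖MvPolynomial.eval ![x, t] H‖ₑ ^ α)⁻¹) x) := by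
    intro 𝕜 _ _ _ _ H α
    have h1 : Continuous fun q : 𝕜 × 𝕜 => MvPolynomial.eval ![q.1, q.2] H :=
      (MvPolynomial.continuous_eval H).comp (continuous_pi fun i => by
        fin_cases i
        · exact continuous_fst
        · exact continuous_snd)
    have h2 : Measurable fun q : 𝕜 × 𝕜 => (‖MvPolynomial.eval ![q.1, q.2] H‖ₑ ^ α)⁻¹ :=
      (h1.measurable.enorm.pow_const α).inv
    exact h2.indicator (measurable_fst measurableSet_closedBall)
  refine ⟨(∏ i, A i) * (∏ i, B i) * U', fun δ hδ => ?_⟩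
  have hδα : 0 < δ ^ α := Real.rpow_pos_of_pos hδ α
  refine (measure_le_of_slices (B := Metric.closedBall 0 R) measurableSet_closedBall
    (ENNReal.ofReal (δ ^ α))
    (fun i => hm (F i) α) (fun i => hm (G i) (2 * α))
    (a := fun i => (A i : ℝ≥0∞)) (b := fun i => (B i : ℝ≥0∞)) (fun i t => ?_) (fun i t => ?_)
    (fun p hp => ?_)).trans (le_of_eq ?_)
  · rw [lintegral_indicator measurableSet_closedBall]; exact hA i t
  · rw [lintegral_indicator measurableSet_closedBall]; exact hB i t
  · obtain ⟨h1, h2⟩ := hp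
    rw [mem_closedBall_zero_iff] at h1
    have h3 := (norm_fst_le p).trans h1
    refine ⟨by simpa using (norm_snd_le p).trans h1, ?_⟩
    have h4 : ∀ i, p.1.1 i ∈ Metric.closedBall (0 : ℝ) R := fun i => by
      rw [mem_closedBall_zero_iff]
      exact (norm_le_pi_norm p.1.1 i).trans ((norm_fst_le p.1).trans h3)
    have h5 : ∀ i, p.1.2 i ∈ Metric.closedBall (0 : ℂ) R := fun i => by
      rw [mem_closedBall_zero_iff]
      exact (norm_le_pi_norm p.1.2 i).trans ((norm_snd_le p.1).trans h3)
    simp only [Set.indicator_of_mem (h4 _), Set.indicator_of_mem (h5 _)]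
    have hf1 : ∀ i, ‖MvPolynomial.eval ![p.1.1 i, p.2.1 i] (F i)‖ₑ ^ α ≠ ∞ := fun i =>
      ENNReal.rpow_ne_top_of_nonneg hα0 enorm_ne_top
    have hf2 : ∀ i, ‖MvPolynomial.eval ![p.1.2 i, p.2.2 i] (G i)‖ₑ ^ (2 * α) ≠ ∞ := fun i =>
      ENNReal.rpow_ne_top_of_nonneg (by positivity) enorm_ne_top
    rw [← ENNReal.prod_inv_distrib (fun i _ j _ _ => Or.inr (hf1 j)),
      ← ENNReal.prod_inv_distrib (fun i _ j _ _ => Or.inr (hf2 j)),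
      ← ENNReal.mul_inv (Or.inr (ENNReal.prod_ne_top fun i _ => hf2 i))
        (Or.inl (ENNReal.prod_ne_top fun i _ => hf1 i)), ← div_eq_mul_inv]
    rw [ENNReal.le_div_iff_mul_le (Or.inr (by simpa using hδα)) (Or.inr ENNReal.ofReal_ne_top),
      one_mul]
    have h6 : (∏ i, ‖MvPolynomial.eval ![p.1.1 i, p.2.1 i] (F i)‖ₑ ^ α) *
        ∏ i, ‖MvPolynomial.eval ![p.1.2 i, p.2.2 i] (G i)‖ₑ ^ (2 * α) =
        ENNReal.ofReal ((∏ i, |MvPolynomial.eval ![p.1.1 i, p.2.1 i] (F i)|) *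
          ∏ i, ‖MvPolynomial.eval ![p.1.2 i, p.2.2 i] (G i)‖ ^ 2) ^ α := by
      rw [ENNReal.ofReal_mul (Finset.prod_nonneg fun _ _ => abs_nonneg _),
        ENNReal.mul_rpow_of_nonneg _ _ hα0,
        ENNReal.ofReal_prod_of_nonneg fun _ _ => abs_nonneg _,
        ENNReal.ofReal_prod_of_nonneg fun _ _ => by positivity,
        ← ENNReal.prod_rpow_of_nonneg hα0, ← ENNReal.prod_rpow_of_nonneg hα0]
      congr 1
      · refine Finset.prod_congr rfl fun i _ => ?_
        rw [← Real.norm_eq_abs, ofReal_norm]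
      · refine Finset.prod_congr rfl fun i _ => ?_
        rw [ENNReal.ofReal_pow (norm_nonneg _), ofReal_norm, ENNReal.rpow_mul, ENNReal.rpow_two]
    rw [h6, ← ENNReal.ofReal_rpow_of_pos hδ]
    exact ENNReal.rpow_le_rpow (ENNReal.ofReal_le_ofReal h2) hα0
  · rw [show volume (Metric.closedBall (0 : (ι → ℝ) × (κ → ℂ)) R) = (U' : ℝ≥0∞) from hU'.symm]
    push_cast
    ring

end pieces

/-! ### The region `X^{1/m} D` in `K_∞²` -/

/-- The region is bounded; the radius refers to the maximum norm on `K_∞²`. -/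
theorem BoxData.D_subset_closedBall {K : Type*} [Field K] [NumberField K] (B : BoxData K) :
    ∃ R : ℝ, B.D ⊆ Metric.closedBall 0 R := by
  have hsq : ∀ a b r : ℝ, Real.sqrt (a ^ 2 + b ^ 2) ≤ r → |a| ≤ r ∧ |b| ≤ r := fun a b r h =>
    ⟨(Real.abs_le_sqrt (by nlinarith [sq_nonneg b])).trans h,
      (Real.abs_le_sqrt (by nlinarith [sq_nonneg a])).trans h⟩
  set rR : {w : InfinitePlace K // w.IsReal} → ℝ := fun w =>
    B.radR w + |(B.ctrR w).1| + |(B.ctrR w).2|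
  set rC : {w : InfinitePlace K // w.IsComplex} → ℝ := fun w =>
    B.radC w + ‖(B.ctrC w).1‖ + ‖(B.ctrC w).2‖
  have hR0 : ∀ w, 0 ≤ rR w := fun w => by have := B.radR_pos w; positivity
  have hC0 : ∀ w, 0 ≤ rC w := fun w => by have := B.radC_pos w; positivity
  have hR : 0 ≤ ∑ w, rR w := Finset.sum_nonneg fun w _ => hR0 w
  have hC : 0 ≤ ∑ w, rC w := Finset.sum_nonneg fun w _ => hC0 w
  refine ⟨∑ w, rR w + ∑ w, rC w, fun p hp => ?_⟩
  obtain ⟨h1, h2⟩ := hp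
  have h3 : ∀ w, ‖p.1.1 w‖ ≤ ∑ w, rR w + ∑ w, rC w ∧ ‖p.2.1 w‖ ≤ ∑ w, rR w + ∑ w, rC w := by
    intro w
    have h := hsq _ _ _ (h1 w)
    have h4 : rR w ≤ ∑ w, rR w := Finset.single_le_sum (fun w _ => hR0 w) (Finset.mem_univ w)
    have h5 := abs_sub_abs_le_abs_sub (p.1.1 w) (B.ctrR w).1
    have h6 := abs_sub_abs_le_abs_sub (p.2.1 w) (B.ctrR w).2
    have h7 := abs_nonneg (B.ctrR w).1
    have h8 := abs_nonneg (B.ctrR w).2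
    simp only [rR, Real.norm_eq_abs] at *
    constructor <;> linarith
  have h3' : ∀ w, ‖p.1.2 w‖ ≤ ∑ w, rR w + ∑ w, rC w ∧ ‖p.2.2 w‖ ≤ ∑ w, rR w + ∑ w, rC w := by
    intro w
    have h := hsq _ _ _ (h2 w)
    rw [abs_norm, abs_norm] at h
    have h4 : rC w ≤ ∑ w, rC w := Finset.single_le_sum (fun w _ => hC0 w) (Finset.mem_univ w)
    have h5 := norm_sub_norm_le (p.1.2 w) (B.ctrC w).1
    have h6 := norm_sub_norm_le (p.2.2 w) (B.ctrC w).2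
    have h7 := norm_nonneg (B.ctrC w).1
    have h8 := norm_nonneg (B.ctrC w).2
    simp only [rC] at *
    constructor <;> linarith
  rw [mem_closedBall_zero_iff]
  have hQ := add_nonneg hR hC
  generalize ∑ w, rR w + ∑ w, rC w = Q at *
  refine norm_prod_le_iff.mpr ⟨norm_prod_le_iff.mpr ⟨?_, ?_⟩, norm_prod_le_iff.mpr ⟨?_, ?_⟩⟩
  · exact (pi_norm_le_iff_of_nonneg hQ).mpr fun w => (h3 w).1
  · exact (pi_norm_le_iff_of_nonneg hQ).mpr fun w => (h3' w).1
  · exact (pi_norm_le_iff_of_nonneg hQ).mpr fun w => (h3 w).2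
  · exact (pi_norm_le_iff_of_nonneg hQ).mpr fun w => (h3' w).2

/-- Dilation by `X^{1/m}` multiplies volumes on `K_∞²`, of real dimension `2 m`, by `X²`. -/
theorem volume_smul_mixed {K : Type*} [Field K] [NumberField K]
    (D : Set (KInfty K × KInfty K)) {X : ℝ} (hX : 0 < X) :
    volume ((X ^ ((1 : ℝ) / (Module.finrank ℚ K))) • D) = ENNReal.ofReal (X ^ 2) * volume D := by
  have hm : (0 : ℝ) < Module.finrank ℚ K := by exact_mod_cast Module.finrank_pos
  have : (volume : Measure (KInfty K × KInfty K)).IsAddHaarMeasure :=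
    Measure.prod.instIsAddHaarMeasure (volume : Measure (KInfty K)) (volume : Measure (KInfty K))
  have : BorelSpace (KInfty K × KInfty K) := Prod.borelSpace
  rw [Measure.addHaar_smul, Module.finrank_prod, mixedEmbedding.finrank,
    abs_of_nonneg (by positivity)]
  congr 2
  rw [← Real.rpow_natCast, ← Real.rpow_mul hX.le, ← Real.rpow_natCast]
  congr 1
  push_cast
  field_simp
  norm_num

/-- Dilation by `X^{1/m}` multiplies `𝔑(F(s, t))` by `X^d`, since `𝔑` is homogeneous of
degree `m`. -/
theorem normInfty_evalAtPlaces_smul {K : Type*} [Field K] [NumberField K]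
    {F : MvPolynomial (Fin 2) (𝓞 K)} {d : ℕ} (hF : F.IsHomogeneous d) {X : ℝ} (hX : 0 < X)
    (u : KInfty K × KInfty K) :
    normInfty K (evalAtPlaces K F ((X ^ ((1 : ℝ) / (Module.finrank ℚ K))) • u).1
      ((X ^ ((1 : ℝ) / (Module.finrank ℚ K))) • u).2) =
      X ^ d * normInfty K (evalAtPlaces K F u.1 u.2) := by
  have hm : (0 : ℝ) < Module.finrank ℚ K := by exact_mod_cast Module.finrank_pos
  set T := X ^ ((1 : ℝ) / (Module.finrank ℚ K)) with hT
  have hT0 : 0 < T := by positivity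
  have hTm : T ^ Module.finrank ℚ K = X := by
    rw [hT, ← Real.rpow_natCast, ← Real.rpow_mul hX.le]
    field_simp
    simp
  have h1 : ∀ w, realEvalForm K F w (T * u.1.1 w) (T * u.2.1 w) =
      T ^ d * realEvalForm K F w (u.1.1 w) (u.2.1 w) := fun w =>
    eval_scale (hF.map _) _ _ _
  have h2 : ∀ w, complexEvalForm K F w (T * u.1.2 w) (T * u.2.2 w) =
      (T : ℂ) ^ d * complexEvalForm K F w (u.1.2 w) (u.2.2 w) := fun w =>
    eval_scale (hF.map _) _ _ _
  simp only [normInfty, evalAtPlaces, Prod.smul_fst, Prod.smul_snd, Pi.smul_apply, smul_eq_mul,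
    Complex.real_smul, h1, h2, abs_mul, norm_mul, norm_pow, Complex.norm_real, Real.norm_eq_abs,
    abs_pow, abs_of_pos hT0, mul_pow, Finset.prod_mul_distrib, Finset.prod_const,
    Finset.card_univ]
  have h3 : X ^ d = (T ^ d) ^ Fintype.card {w : InfinitePlace K // w.IsReal} *
      ((T ^ d) ^ 2) ^ Fintype.card {w : InfinitePlace K // w.IsComplex} := by
    rw [← hTm, ← card_add_two_mul_card_eq_rank, nrRealPlaces, nrComplexPlaces]
    ring
  rw [h3]
  ring

theorem normInfty_nonneg {K : Type*} [Field K] [NumberField K] (x : KInfty K) :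
    0 ≤ normInfty K x :=
  mul_nonneg (Finset.prod_nonneg fun _ _ => abs_nonneg _)
    (Finset.prod_nonneg fun _ _ => by positivity)

theorem eval_one_zero_map_ne_zero {R 𝕜 : Type*} [CommRing R] [Field 𝕜] (f : R →+* 𝕜)
    (hf : Function.Injective f) {F : MvPolynomial (Fin 2) R}
    (h : MvPolynomial.eval ![1, 0] F ≠ 0) :
    MvPolynomial.eval ![1, 0] (F.map f) ≠ 0 := by
  have h1 : (![1, 0] : Fin 2 → 𝕜) = f ∘ ![1, 0] := by
    ext i; fin_cases i <;> simp
  rw [h1, MvPolynomial.eval_map, ← MvPolynomial.eval₂_comp]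
  exact (map_ne_zero_iff f hf).mpr h

theorem normInfty_volBound {K : Type*} [Field K] [NumberField K]
    {F : MvPolynomial (Fin 2) (𝓞 K)} {d : ℕ} (hF : F.IsHomogeneous d) (hd : 0 < d)
    (hF0 : evalForm K F 1 0 ≠ 0) (R : ℝ) {α : ℝ} (hα0 : 0 ≤ α) (hα : d * α < 1) :
    ∃ C : NNReal, ∀ δ : ℝ, 0 < δ →
      volume {u : KInfty K × KInfty K | u ∈ Metric.closedBall 0 R ∧
        normInfty K (evalAtPlaces K F u.1 u.2) ≤ δ} ≤ C * ENNReal.ofReal (δ ^ α) := by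
  have hir : ∀ w, Function.Injective (realEmbed K w) := fun w =>
    (embedding_of_isReal w.2).injective.comp (FaithfulSMul.algebraMap_injective (𝓞 K) K)
  have hic : ∀ w, Function.Injective (complexEmbed K w) := fun w =>
    w.1.embedding.injective.comp (FaithfulSMul.algebraMap_injective (𝓞 K) K)
  have hr : ∀ w, MvPolynomial.eval ![1, 0] (F.map (realEmbed K w)) ≠ 0 := fun w =>
    eval_one_zero_map_ne_zero _ (hir w) hF0
  have hc : ∀ w, MvPolynomial.eval ![1, 0] (F.map (complexEmbed K w)) ≠ 0 := fun w =>
    eval_one_zero_map_ne_zero _ (hic w) hF0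
  exact norm_piece R hα0 hα
    (fun w => hasSmallFactor_real (hF.map (realEmbed K w))
      (fun h => hr w (by rw [h, map_zero])) hd) hr
    (fun w => hasSmallFactor_complex (hF.map (complexEmbed K w))
      (fun h => hc w (by rw [h, map_zero])) hd) hc

/-- After rescaling by `T⁻¹`, the points violating one of the conditions `|H_w(s_w, t_w)| ≥ 1`
have volume `O(T⁻¹)`. -/
theorem forms_volBound {K : Type*} [Field K] [NumberField K]
    (Hr : {w : InfinitePlace K // w.IsReal} → Finset (MvPolynomial (Fin 2) ℝ))
    (Hc : {w : InfinitePlace K // w.IsComplex} → Finset (MvPolynomial (Fin 2) ℂ))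
    (hr : ∀ w, ∀ H ∈ Hr w, ∃ e : ℕ, 1 ≤ e ∧ H.IsHomogeneous e ∧ Squarefree H)
    (hc : ∀ w, ∀ H ∈ Hc w, ∃ e : ℕ, 1 ≤ e ∧ H.IsHomogeneous e ∧ Squarefree H) (R : ℝ) :
    VolBound (fun T => ENNReal.ofReal T⁻¹) (fun T => {u : KInfty K × KInfty K |
      u ∈ Metric.closedBall 0 R ∧
        ((∃ w, ∃ H ∈ Hr w, ‖MvPolynomial.eval ![T * u.1.1 w, T * u.2.1 w] H‖ < 1) ∨
          ∃ w, ∃ H ∈ Hc w, ‖MvPolynomial.eval ![T * u.1.2 w, T * u.2.2 w] H‖ < 1)}) := by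
  have h1 := VolBound.biUnion (Ω := KInfty K × KInfty K) Finset.univ fun w _ =>
    VolBound.biUnion (Hr w) fun H hH => by
      obtain ⟨e, he, hhom, hsq⟩ := hr w H hH
      exact form_piece_real R w he (hasSmallFactor_real hhom hsq.ne_zero he)
  have h2 := VolBound.biUnion (Ω := KInfty K × KInfty K) Finset.univ fun w _ =>
    VolBound.biUnion (Hc w) fun H hH => by
      obtain ⟨e, he, hhom, hsq⟩ := hc w H hH
      exact form_piece_complex R w he (hasSmallFactor_complex hhom hsq.ne_zero he)
  refine (h1.union h2).mono (fun _ _ => le_rfl) ?_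
  rintro T - u ⟨hu, ⟨w, H, hH, h⟩ | ⟨w, H, hH, h⟩⟩
  · left
    simp only [Set.mem_iUnion]
    exact ⟨w, Finset.mem_univ _, H, hH, hu, h⟩
  · right
    simp only [Set.mem_iUnion]
    exact ⟨w, Finset.mem_univ _, H, hH, hu, h⟩

/-- After rescaling, the points violating one of the conditions `𝔑(F_i(s, t)) ≥ B_i √(X^{d_i})`
have volume `O(X^{-1/2 + ε})`. -/
theorem norm_conditions_volBound {K : Type*} [Field K] [NumberField K] {n : ℕ}
    (S : SystemOfForms K n) (hnot_t : ∀ j, evalForm K (S.F j) 1 0 ≠ 0)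
    (B : Fin n → ℝ) (hB : ∀ i, 0 ≤ B i) (R : ℝ) {ε : ℝ} (hε : 0 < ε) :
    VolBound (fun X => ENNReal.ofReal (X ^ (-(1 / 2) + ε))) (fun X =>
      {u : KInfty K × KInfty K | u ∈ Metric.closedBall 0 R ∧
        ∃ i, X ^ S.dF i * normInfty K (evalAtPlaces K (S.F i) u.1 u.2) <
          B i * Real.sqrt (X ^ S.dF i)}) := by
  have h1 := VolBound.biUnion (Ω := KInfty K × KInfty K)
    (g := fun X => ENNReal.ofReal (X ^ (-(1 / 2) + ε)))
    (S := fun i X => {u : KInfty K × KInfty K | u ∈ Metric.closedBall 0 R ∧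
        normInfty K (evalAtPlaces K (S.F i) u.1 u.2) ≤ (B i + 1) * X ^ (-((S.dF i : ℝ) / 2))})
    Finset.univ fun i _ => by
      have hd : (0 : ℝ) < S.dF i := by exact_mod_cast S.dF_pos i
      -- With `α = (1 - η) / d` the exponent of `X` is `-(1 - η) / 2 ≤ -1/2 + ε`; the minimum
      -- with `1/2` keeps `α` nonnegative when `ε` is large.
      have hη0 : 0 < min (1 / 2) ε := by positivity
      have hη1 : min (1 / 2) ε ≤ 1 / 2 := min_le_left _ _
      have hη2 : min (1 / 2) ε ≤ ε := min_le_right _ _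
      generalize min (1 / 2) ε = η at *
      set α : ℝ := (1 - η) / S.dF i with hα
      have hα0 : 0 ≤ α := div_nonneg (by linarith) hd.le
      obtain ⟨C, hC⟩ := normInfty_volBound (S.F_homog i) (S.dF_pos i) (hnot_t i) R hα0
        (by rw [hα, mul_div_cancel₀ _ hd.ne']; linarith)
      -- `B i` may vanish, whereas `normInfty_volBound` needs a positive threshold.
      have hb : 0 < B i + 1 := by linarith [hB i]
      refine ⟨C * ((B i + 1) ^ α).toNNReal, fun X hX => ?_⟩
      have hX0 : 0 < X := by linarith
      refine (hC _ (by positivity)).trans ?_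
      rw [ENNReal.coe_mul, mul_assoc]
      gcongr
      rw [Real.mul_rpow hb.le (by positivity), ENNReal.ofReal_mul (by positivity),
        ← Real.rpow_mul hX0.le]
      refine mul_le_mul' le_rfl (ENNReal.ofReal_le_ofReal
        (Real.rpow_le_rpow_of_exponent_le hX ?_))
      rw [hα, show -((S.dF i : ℝ) / 2) * ((1 - η) / S.dF i) = -((1 - η) / 2) by field_simp]
      linarith
  refine h1.mono (fun _ _ => le_rfl) ?_
  rintro X hX u ⟨hu, i, hi⟩
  have hX0 : 0 < X := by linarith
  simp only [Set.mem_iUnion]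
  refine ⟨i, Finset.mem_univ _, hu, ?_⟩
  have hs : Real.sqrt (X ^ S.dF i) = X ^ S.dF i * X ^ (-((S.dF i : ℝ) / 2)) := by
    rw [Real.sqrt_eq_rpow, ← Real.rpow_natCast, ← Real.rpow_mul hX0.le, ← Real.rpow_add hX0]
    congr 1
    ring
  rw [hs, mul_left_comm] at hi
  refine (lt_of_mul_lt_mul_left hi (by positivity)).le.trans ?_
  have : 0 ≤ X ^ (-((S.dF i : ℝ) / 2)) := by positivity
  gcongr
  linarith

end

/-- **Lemma 4.10 (volume asymptotics).** For each `ψ ∈ {0,1}^n` and every `ε > 0`,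
`ω*_ψ(X;(1,…,1)) = X² vol(𝒟) + O_ε(X^{2−1/m} + X^{3/2+ε})`, uniformly in `X ≥ 1`. -/
theorem omegaStar_at_one_asymptotic
    (K : Type*) [Field K] [NumberField K]
    (𝔯 : Ideal (𝓞 K)) (h𝔯 : 𝔯 ≠ ⊥)
    (n : ℕ) (S : SystemOfForms K n)
    (hnot_t : ∀ j, evalForm K (S.F j) 1 0 ≠ 0)
    (P : Triplet K 𝔯) (hP : StronglyAdmissible K S P)
    (c : Fin n → ℝ) (hc : ∀ i, 0 < c i)
    (hY : ∀ X : ℝ, 1 < X → ∀ p ∈ Mstar K P X, ∀ i,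
      (Ideal.absNorm (Ideal.span {evalForm K (S.F i) p.1 p.2}) : ℝ) /
          (Ideal.absNorm (coflatPart K P.w
            (Ideal.span {evalForm K (S.F i) P.σ P.τ})) : ℝ)
        < c i * X ^ (S.dF i))
    (Hr : {w : InfinitePlace K // w.IsReal} → Finset (MvPolynomial (Fin 2) ℝ))
    (Hc : {w : InfinitePlace K // w.IsComplex} → Finset (MvPolynomial (Fin 2) ℂ))
    (hHr0 : ∀ w, MvPolynomial.X 0 ∈ Hr w ∧ MvPolynomial.X 1 ∈ Hr w)
    (hHc0 : ∀ w, MvPolynomial.X 0 ∈ Hc w ∧ MvPolynomial.X 1 ∈ Hc w)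
    (hHrF : ∀ w, ∀ j, (S.F j).map (realEmbed K w) ∈ Hr w)
    (hHcF : ∀ w, ∀ j, (S.F j).map (complexEmbed K w) ∈ Hc w)
    (hHr2 : ∀ w, ∀ j, S.dF j = 2 → ¬ Irreducible ((S.F j).map (realEmbed K w)) →
      ∃ G H' : MvPolynomial (Fin 2) ℝ, G ∈ Hr w ∧ H' ∈ Hr w ∧
        G.IsHomogeneous 1 ∧ H'.IsHomogeneous 1 ∧ G * H' = (S.F j).map (realEmbed K w))
    (hHc2 : ∀ w, ∀ j, S.dF j = 2 →
      ∃ G H' : MvPolynomial (Fin 2) ℂ, G ∈ Hc w ∧ H' ∈ Hc w ∧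
        G.IsHomogeneous 1 ∧ H'.IsHomogeneous 1 ∧ G * H' = (S.F j).map (complexEmbed K w))
    (hHsep : (∀ w, ∀ H ∈ Hr w, ∃ e : ℕ, 1 ≤ e ∧ H.IsHomogeneous e ∧ Squarefree H) ∧
      (∀ w, ∀ H ∈ Hc w, ∃ e : ℕ, 1 ≤ e ∧ H.IsHomogeneous e ∧ Squarefree H)) :
    ∀ ε : ℝ, 0 < ε → ∃ C : ℝ, 0 < C ∧
      ∀ ψ : Fin n → Bool, ∀ X : ℝ, 1 ≤ X →
        |omegaStar K S P Hr Hc c ψ X (fun _ => 1) -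
            X ^ 2 * (volume P.box.D).toReal|
          ≤ C * (X ^ (2 - 1 / (Module.finrank ℚ K : ℝ)) + X ^ (3 / 2 + ε)) := by
  intro ε hε
  set N : Fin n → ℝ := fun i => (Ideal.absNorm (coflatPart K P.w
    (Ideal.span {evalForm K (S.F i) P.σ P.τ})) : ℝ) with hN
  obtain ⟨R, hR⟩ := P.box.D_subset_closedBall
  obtain ⟨C₁, hC₁⟩ := forms_volBound Hr Hc hHsep.1 hHsep.2 R
  obtain ⟨C₂, hC₂⟩ := norm_conditions_volBound S hnot_t (fun i => Real.sqrt (c i) * N i)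
    (fun i => by positivity) R hε
  have hDfin : volume P.box.D ≠ ⊤ := measure_ne_top_of_subset hR measure_closedBall_lt_top.ne
  refine ⟨C₁ + C₂ + 1, by positivity, fun ψ X hX => ?_⟩
  have hX0 : 0 < X := by linarith
  have hm : (0 : ℝ) < Module.finrank ℚ K := by exact_mod_cast Module.finrank_pos
  set T := X ^ ((1 : ℝ) / (Module.finrank ℚ K)) with hT
  have hT1 : 1 ≤ T := Real.one_le_rpow hX (by positivity)
  have hT0 : T ≠ 0 := by positivity
  have hvol : volume (T • P.box.D) = ENNReal.ofReal (X ^ 2) * volume P.box.D :=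
    volume_smul_mixed _ hX0
  set B₁ := {u : KInfty K × KInfty K | u ∈ Metric.closedBall 0 R ∧
    ((∃ w, ∃ H ∈ Hr w, ‖MvPolynomial.eval ![T * u.1.1 w, T * u.2.1 w] H‖ < 1) ∨
      ∃ w, ∃ H ∈ Hc w, ‖MvPolynomial.eval ![T * u.1.2 w, T * u.2.2 w] H‖ < 1)} with hB₁
  set B₂ := {u : KInfty K × KInfty K | u ∈ Metric.closedBall 0 R ∧
    ∃ i, X ^ S.dF i * normInfty K (evalAtPlaces K (S.F i) u.1 u.2) <
      (Real.sqrt (c i) * N i) * Real.sqrt (X ^ S.dF i)} with hB₂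
  have hV₁ : volume (T • B₁) ≤ ENNReal.ofReal (C₁ * X ^ (2 - 1 / (Module.finrank ℚ K : ℝ))) := by
    rw [volume_smul_mixed _ hX0]
    refine (mul_le_mul' le_rfl (hC₁ T hT1)).trans (le_of_eq ?_)
    rw [← ENNReal.ofReal_coe_nnreal, ← ENNReal.ofReal_mul (by positivity),
      ← ENNReal.ofReal_mul (by positivity), hT, ← Real.rpow_neg hX0.le, mul_left_comm,
      ← Real.rpow_two, ← Real.rpow_add hX0, ← sub_eq_add_neg]
  have hV₂ : volume (T • B₂) ≤ ENNReal.ofReal (C₂ * X ^ (3 / 2 + ε)) := by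
    rw [volume_smul_mixed _ hX0]
    refine (mul_le_mul' le_rfl (hC₂ X hX)).trans (le_of_eq ?_)
    rw [← ENNReal.ofReal_coe_nnreal, ← ENNReal.ofReal_mul (by positivity),
      ← ENNReal.ofReal_mul (by positivity), mul_left_comm,
      ← Real.rpow_two, ← Real.rpow_add hX0]
    congr 3
    ring
  rw [omegaStar]
  set Good := {p : KInfty K × KInfty K | _}
  have hsub : Good ⊆ T • P.box.D := fun p hp => hp.1
  -- The points lost when passing from the whole region to `Good` lie in two small dilated sets, so
  -- that subadditivity of the (outer) measure gives the lower bound.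
  have hcov : T • P.box.D ⊆ Good ∪ (T • B₁ ∪ T • B₂) := by
    rintro _ ⟨u, hu, rfl⟩
    by_cases h₁ : u ∈ B₁
    · exact Or.inr (Or.inl (Set.smul_mem_smul_set h₁))
    by_cases h₂ : u ∈ B₂
    · exact Or.inr (Or.inr (Set.smul_mem_smul_set h₂))
    left
    have h₁' : ¬ _ := fun h => h₁ ⟨hR hu, h⟩
    have h₂' : ¬ _ := fun h => h₂ ⟨hR hu, h⟩
    push Not at h₁' h₂'
    refine ⟨Set.smul_mem_smul_set hu, fun i => ?_, fun w H hH => ?_, fun w H hH => ?_⟩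
    · split_ifs
      · rw [normInfty_evalAtPlaces_smul (S.F_homog i) hX0]
        refine le_trans (le_of_eq ?_) (h₂' i)
        rw [Real.sqrt_mul (hc i).le]
        ring
      · exact normInfty_nonneg _
    · exact h₁'.1 w H hH
    · exact h₁'.2 w H hH
  have hTfin : volume (T • P.box.D) ≠ ⊤ := by
    rw [hvol]; exact ENNReal.mul_ne_top ENNReal.ofReal_ne_top hDfin
  have hGfin : volume Good ≠ ⊤ := measure_ne_top_of_subset hsub hTfin
  have hTr : (volume (T • P.box.D)).toReal = X ^ 2 * (volume P.box.D).toReal := by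
    rw [hvol, ENNReal.toReal_mul, ENNReal.toReal_ofReal (by positivity)]
  have hup : (volume Good).toReal ≤ X ^ 2 * (volume P.box.D).toReal := by
    rw [← hTr]; exact ENNReal.toReal_mono hTfin (measure_mono hsub)
  have hp₁ : 0 ≤ X ^ (2 - 1 / (Module.finrank ℚ K : ℝ)) := by positivity
  have hp₂ : 0 ≤ X ^ (3 / 2 + ε) := by positivity
  have hlow : X ^ 2 * (volume P.box.D).toReal ≤ (volume Good).toReal +
      (C₁ * X ^ (2 - 1 / (Module.finrank ℚ K : ℝ)) + C₂ * X ^ (3 / 2 + ε)) := by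
    rw [← hTr]
    refine ENNReal.toReal_le_of_le_ofReal (by positivity) ?_
    rw [ENNReal.ofReal_add (by positivity) (by positivity), ENNReal.ofReal_toReal hGfin,
      ENNReal.ofReal_add (by positivity) (by positivity)]
    refine (measure_mono hcov).trans ((measure_union_le _ _).trans ?_)
    exact add_le_add le_rfl ((measure_union_le _ _).trans (add_le_add hV₁ hV₂))
  rw [abs_sub_comm, abs_of_nonneg (by linarith)]
  have hq₁ : 0 ≤ (C₁ : ℝ) := C₁.2
  have hq₂ : 0 ≤ (C₂ : ℝ) := C₂.2
  nlinarith [mul_nonneg hq₁ hp₂, mul_nonneg hq₂ hp₁]
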